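/- Let G~ be a mixed bicyclic graph whose underlying graph is ∞(p,1,q) with p even and q odd. Then r(G~) = 2m(G) − 2κ(G) + 1 if and only if the odd cycle of G~ has even signature and the even cycle C~_p of G~ satisfies σ(C~_p) ≡ p (mod 4). -/

import Mathlib

open scoped Classical

namespace MixedPaper

universe u

/-- A mixed graph: a finite simple graph together with an orientation of a subset
of its edges.  `arc u v = true` means there is an arc from `u` to `v`. -/
structure MixedGraph (V : Type u) where
  graph : SimpleGraph V
  arc : V → V → Bool
  arc_adj : ∀ u v, arc u v → graph.Adj u v
  arc_antisymm : ∀ u v, arc u v → ¬ arc v u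

variable {V : Type u}

/-- The Hermitian adjacency matrix of a mixed graph. -/
noncomputable def MixedGraph.hMatrix [Fintype V] [DecidableEq V] (M : MixedGraph V) :
    Matrix V V ℂ := fun u v =>
  if M.arc u v then Complex.I
  else if M.arc v u then -Complex.I
  else if M.graph.Adj u v then 1 else 0

/-- The H-rank of a mixed graph: the rank of its Hermitian adjacency matrix. -/
noncomputable def MixedGraph.hRank [Fintype V] [DecidableEq V] (M : MixedGraph V) : ℕ :=
  M.hMatrix.rank

/-- The matching number of a simple graph. -/
noncomputable def matchingNumber (G : SimpleGraph V) : ℕ :=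
  sSup {k | ∃ N : G.Subgraph, N.IsMatching ∧ N.edgeSet.ncard = k}

/-- A subgraph is a cycle subgraph if it is connected and every one of its vertices
has exactly two neighbours in it. -/
def IsCycleSubgraph {G : SimpleGraph V} (C : G.Subgraph) : Prop :=
  C.Connected ∧ ∀ v ∈ C.verts, {w | C.Adj v w}.ncard = 2

/-- κ(G) : the number of even cycles of G. -/
noncomputable def evenCycleCount (G : SimpleGraph V) : ℕ :=
  {C : G.Subgraph | IsCycleSubgraph C ∧ Even C.verts.ncard}.ncard

/-- c(G) = |E(G)| - |V(G)| + ω(G), the cyclomatic number. -/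
noncomputable def cyclomatic [Fintype V] (G : SimpleGraph V) : ℤ :=
  (G.edgeSet.ncard : ℤ) - (Fintype.card V : ℤ) + (Nat.card G.ConnectedComponent : ℤ)

/-- The induced mixed subgraph on a set of vertices. -/
def MixedGraph.induce (M : MixedGraph V) (S : Set V) : MixedGraph S where
  graph := M.graph.induce S
  arc := fun a b => M.arc a.1 b.1
  arc_adj := fun a b h => M.arc_adj a.1 b.1 h
  arc_antisymm := fun a b h => M.arc_antisymm a.1 b.1 h

/-- The mixed subgraph induced by a connected component of the underlying graph. -/
def MixedGraph.comp (M : MixedGraph V) (c : M.graph.ConnectedComponent) :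
    MixedGraph c.supp := M.induce c.supp

/-- The signature |f - b| of a closed walk in a mixed graph: the absolute difference
between the numbers of forward and backward arcs along the walk. -/
def walkSignature (M : MixedGraph V) {u : V} (w : M.graph.Walk u u) : ℕ :=
  ((w.darts.countP fun d => M.arc d.toProd.1 d.toProd.2 : ℤ) -
    (w.darts.countP fun d => M.arc d.toProd.2 d.toProd.1 : ℤ)).natAbs

/-- The signature of the cycle subgraph `C` of the mixed graph `M` satisfies the
predicate `P` (expressed via a closed walk traversing `C`; the signature does not
depend on the choice of traversal). -/
def CycleSig (M : MixedGraph V) (C : M.graph.Subgraph) (P : ℕ → Prop) : Prop :=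
  ∃ (u : V) (w : M.graph.Walk u u), w.IsCycle ∧
    {v | v ∈ w.support} = C.verts ∧ {e | e ∈ w.edges} = C.edgeSet ∧
    P (walkSignature M w)

/-- `C` is a pendant cycle with unique vertex `x` of degree 3. -/
def IsPendantCycle (G : SimpleGraph V) (C : G.Subgraph) (x : V) : Prop :=
  IsCycleSubgraph C ∧ x ∈ C.verts ∧ {w | G.Adj x w}.ncard = 3 ∧
    ∀ v ∈ C.verts, v ≠ x → {w | G.Adj v w}.ncard = 2

/-- G has no pendant vertices (vertices of degree 1). -/
def NoPendantVerts (G : SimpleGraph V) : Prop := ∀ u : V, {w | G.Adj u w}.ncard ≠ 1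

/-- The (distinct) cycles of G are pairwise vertex-disjoint. -/
def CyclesVertexDisjoint (G : SimpleGraph V) : Prop :=
  ∀ C₁ C₂ : G.Subgraph, IsCycleSubgraph C₁ → IsCycleSubgraph C₂ → C₁ ≠ C₂ →
    Disjoint C₁.verts C₂.verts

/-- The (distinct) even cycles of G are pairwise vertex-disjoint. -/
def EvenCyclesVertexDisjoint (G : SimpleGraph V) : Prop :=
  ∀ C₁ C₂ : G.Subgraph, IsCycleSubgraph C₁ → IsCycleSubgraph C₂ →
    Even C₁.verts.ncard → Even C₂.verts.ncard → C₁ ≠ C₂ →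
    Disjoint C₁.verts C₂.verts

/-- One pendant `K₂` deletion step, recorded on the surviving vertex sets:
`u` is pendant in the graph induced on `S` with unique neighbour `v` there,
and both are deleted. -/
def PendantStep (G : SimpleGraph V) (S T : Set V) : Prop :=
  ∃ u v, u ∈ S ∧ v ∈ S ∧ {w | w ∈ S ∧ G.Adj u w} = {v} ∧ T = S \ {u, v}

/-- `S` is reachable from the full vertex set by a sequence of pendant K₂ deletions. -/
def PendantReaches (G : SimpleGraph V) (S : Set V) : Prop :=
  Relation.ReflTransGen (PendantStep G) Set.univ S

/-- The graph induced on `S` has no pendant vertices. -/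
def NoPendantIn (G : SimpleGraph V) (S : Set V) : Prop :=
  ∀ u ∈ S, {w | w ∈ S ∧ G.Adj u w}.ncard ≠ 1

/-- `u` lies on some even cycle of `G`. -/
def OnEvenCycle (G : SimpleGraph V) (u : V) : Prop :=
  ∃ C : G.Subgraph, IsCycleSubgraph C ∧ Even C.verts.ncard ∧ u ∈ C.verts

/-- G is the graph ∞(p,1,q): two cycles of lengths p and q sharing exactly one vertex. -/
def IsInfinityGraph (G : SimpleGraph V) (p q : ℕ) : Prop :=
  ∃ C₁ C₂ : G.Subgraph, IsCycleSubgraph C₁ ∧ IsCycleSubgraph C₂ ∧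
    C₁.verts.ncard = p ∧ C₂.verts.ncard = q ∧
    (C₁.verts ∩ C₂.verts).ncard = 1 ∧ C₁ ⊔ C₂ = ⊤

/-- G is the theta graph θ(p,l,q): three internally disjoint paths with p, l, q
vertices respectively, joining two common endvertices. -/
def IsThetaGraph (G : SimpleGraph V) (p l q : ℕ) : Prop :=
  2 ≤ p ∧ 2 ≤ l ∧ 2 ≤ q ∧ ¬(p = 2 ∧ l = 2) ∧ ¬(p = 2 ∧ q = 2) ∧ ¬(l = 2 ∧ q = 2) ∧
  ∃ (a b : V) (W₁ W₂ W₃ : G.Walk a b), W₁.IsPath ∧ W₂.IsPath ∧ W₃.IsPath ∧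
    W₁.length = p - 1 ∧ W₂.length = l - 1 ∧ W₃.length = q - 1 ∧
    (∀ v : V, v ∈ W₁.support ∨ v ∈ W₂.support ∨ v ∈ W₃.support) ∧
    (∀ e ∈ G.edgeSet, e ∈ W₁.edges ∨ e ∈ W₂.edges ∨ e ∈ W₃.edges) ∧
    {v | v ∈ W₁.support ∧ v ∈ W₂.support} = {a, b} ∧
    {v | v ∈ W₁.support ∧ v ∈ W₃.support} = {a, b} ∧
    {v | v ∈ W₂.support ∧ v ∈ W₃.support} = {a, b}

/-- Every odd cycle of `M` has signature satisfying `P`. -/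
def OddCyclesSig (M : MixedGraph V) (P : ℕ → Prop) : Prop :=
  ∀ C : M.graph.Subgraph, IsCycleSubgraph C → Odd C.verts.ncard → CycleSig M C P

/-- Every even cycle of `M`, of length `n`, has signature `s` satisfying `P n s`. -/
def EvenCyclesSig (M : MixedGraph V) (P : ℕ → ℕ → Prop) : Prop :=
  ∀ C : M.graph.Subgraph, IsCycleSubgraph C → Even C.verts.ncard →
    CycleSig M C (P C.verts.ncard)

/-- The whole mixed graph is a single cycle. -/
def IsCycleMG (M : MixedGraph V) : Prop := IsCycleSubgraph (⊤ : M.graph.Subgraph)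

/-- The family 𝔊₀. -/
def MemG0 [Fintype V] [DecidableEq V] (M : MixedGraph V) : Prop :=
  M.graph.Connected ∧ 1 ≤ cyclomatic M.graph ∧ CyclesVertexDisjoint M.graph ∧
  NoPendantVerts M.graph ∧
  ∃ (C : M.graph.Subgraph) (x : V), IsPendantCycle M.graph C x ∧ Odd C.verts.ncard ∧
    CycleSig M C Odd ∧
    ((M.induce (C.vertsᶜ ∪ {x})).hRank : ℤ) =
      2 * (matchingNumber (M.induce (C.vertsᶜ ∪ {x})).graph : ℤ) -
        2 * cyclomatic (M.induce (C.vertsᶜ ∪ {x})).graph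

/-- The family 𝔛₁ : mixed ∞(p,1,q)-graphs, p even, q odd, whose odd cycle has odd
signature and whose even cycle C̃_p satisfies σ ≡ p (mod 4). -/
def MemX1 (M : MixedGraph V) : Prop :=
  ∃ p q : ℕ, Even p ∧ Odd q ∧ IsInfinityGraph M.graph p q ∧
    OddCyclesSig M Odd ∧ EvenCyclesSig M (fun n s => s % 4 = n % 4)

/-- The family 𝔛₂ : mixed θ(p,l,q)-graphs, p even, l q odd, whose two odd cycles have odd
signatures and whose even cycle C̃_{q+l-2} satisfies q + l + σ ≡ 2 (mod 4). -/
def MemX2 (M : MixedGraph V) : Prop :=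
  ∃ p l q : ℕ, Even p ∧ Odd l ∧ Odd q ∧ IsThetaGraph M.graph p l q ∧
    OddCyclesSig M Odd ∧ EvenCyclesSig M (fun _ s => (q + l + s) % 4 = 2)

/-- The family 𝔊₂ = 𝔊₀ ∪ 𝔛₁ ∪ 𝔛₂ together with the mixed odd cycles of odd signature. -/
def MemG2 [Fintype V] [DecidableEq V] (M : MixedGraph V) : Prop :=
  MemG0 M ∨ MemX1 M ∨ MemX2 M ∨
    (IsCycleMG M ∧ Odd (Nat.card V) ∧ CycleSig M ⊤ Odd)

/-- The family 𝔜₁. -/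
def MemY1 (M : MixedGraph V) : Prop :=
  ∃ p q : ℕ, Even p ∧ Odd q ∧ IsInfinityGraph M.graph p q ∧
    OddCyclesSig M Even ∧ EvenCyclesSig M (fun n s => s % 4 = n % 4)

/-- The family 𝔜₂. -/
def MemY2 (M : MixedGraph V) : Prop :=
  ∃ p l q : ℕ, Even p ∧ Odd l ∧ Odd q ∧ IsThetaGraph M.graph p l q ∧
    OddCyclesSig M Even ∧ EvenCyclesSig M (fun _ s => (q + l + s) % 4 = 2)

/-- `M` is a disjoint union of `k` even cycles and one odd cycle with even signature. -/
def IsDisjointUnionEvenCyclesOddCycleEvenSig (M : MixedGraph V) (k : ℤ) : Prop :=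
  (∀ c : M.graph.ConnectedComponent, IsCycleMG (M.comp c)) ∧
  (({c : M.graph.ConnectedComponent | Even (Nat.card c.supp)}.ncard : ℤ) = k) ∧
  (∃! c : M.graph.ConnectedComponent, Odd (Nat.card c.supp)) ∧
  (∀ c : M.graph.ConnectedComponent, Odd (Nat.card c.supp) →
    CycleSig (M.comp c) ⊤ Even)

/-- The family 𝔉₀. -/
def MemF0 [Fintype V] [DecidableEq V] (M : MixedGraph V) : Prop :=
  M.graph.Connected ∧ 2 ≤ cyclomatic M.graph ∧ CyclesVertexDisjoint M.graph ∧
  NoPendantVerts M.graph ∧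
  (∃ (C₀ : M.graph.Subgraph) (x₀ : V), IsPendantCycle M.graph C₀ x₀ ∧ Odd C₀.verts.ncard ∧
    CycleSig M C₀ Even ∧
    ∀ C : M.graph.Subgraph, IsCycleSubgraph C → C ≠ C₀ →
      Even C.verts.ncard ∧ CycleSig M C (fun s => s % 4 = C.verts.ncard % 4)) ∧
  (∃ (Cq : M.graph.Subgraph) (x : V), IsPendantCycle M.graph Cq x ∧ Even Cq.verts.ncard ∧
    ∃ S : Set ↥(Cq.vertsᶜ ∪ {x}),
      PendantReaches (M.induce (Cq.vertsᶜ ∪ {x})).graph S ∧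
      NoPendantIn (M.induce (Cq.vertsᶜ ∪ {x})).graph S ∧
      IsDisjointUnionEvenCyclesOddCycleEvenSig
        ((M.induce (Cq.vertsᶜ ∪ {x})).induce S)
        (cyclomatic (M.induce (Cq.vertsᶜ ∪ {x})).graph))

/-- The family 𝔉₂ = 𝔉₀ ∪ 𝔜₁ ∪ 𝔜₂ together with the mixed odd cycles of even signature. -/
def MemF2 [Fintype V] [DecidableEq V] (M : MixedGraph V) : Prop :=
  MemF0 M ∨ MemY1 M ∨ MemY2 M ∨
    (IsCycleMG M ∧ Odd (Nat.card V) ∧ CycleSig M ⊤ Even)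

/-- A connected component that is either an even cycle C̃_q with σ ≡ q (mod 4),
or an isolated vertex. -/
def GoodOtherComp (M : MixedGraph V) : Prop :=
  (IsCycleMG M ∧ Even (Nat.card V) ∧
    CycleSig M ⊤ (fun s => s % 4 = (Nat.card V) % 4)) ∨
  Nat.card V = 1

/-- A fractional matching of `G`, given as a weight function on `Sym2 V` vanishing
outside the edge set. -/
def IsFracMatching [Fintype V] [DecidableEq V] (G : SimpleGraph V) (f : Sym2 V → ℝ) : Prop :=
  (∀ e ∈ G.edgeSet, 0 ≤ f e ∧ f e ≤ 1) ∧ (∀ e, e ∉ G.edgeSet → f e = 0) ∧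
    ∀ v : V, ∑ e ∈ Finset.univ.filter (fun e : Sym2 V => v ∈ e), f e ≤ 1

/-- The fractional matching number m*(G). -/
noncomputable def fracMatchingNumber [Fintype V] [DecidableEq V] (G : SimpleGraph V) : ℝ :=
  sSup {x : ℝ | ∃ f : Sym2 V → ℝ, IsFracMatching G f ∧ ∑ e : Sym2 V, f e = x}

/-- Membership in the family ℱ : fractional matchings of total weight m*(G) taking
values in {0, 1/2, 1}. -/
def InOptFamily [Fintype V] [DecidableEq V] (G : SimpleGraph V) (f : Sym2 V → ℝ) : Prop :=
  IsFracMatching G f ∧ (∑ e : Sym2 V, f e) = fracMatchingNumber G ∧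
    ∀ e : Sym2 V, f e = 0 ∨ f e = 1 / 2 ∨ f e = 1

/-- An optimal fractional matching: a member of ℱ with the largest number of
edges of weight 1. -/
def IsOptFracMatching [Fintype V] [DecidableEq V] (G : SimpleGraph V) (f : Sym2 V → ℝ) : Prop :=
  InOptFamily G f ∧
    ∀ g : Sym2 V → ℝ, InOptFamily G g →
      {e : Sym2 V | g e = 1}.ncard ≤ {e : Sym2 V | f e = 1}.ncard

/-- E₁(C) : the edges of `G` with exactly one endpoint on the cycle `C`. -/
def cutEdges (G : SimpleGraph V) (C : G.Subgraph) : Set (Sym2 V) :=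
  {e | e ∈ G.edgeSet ∧ ∃ a b : V, e = s(a, b) ∧ a ∈ C.verts ∧ b ∉ C.verts}


/-- The general solution of `z (i+2) = - z i`. -/
noncomputable def zz (s t : ℂ) (i : ℕ) : ℂ := if Even i then (-1) ^ (i / 2) * s else (-1) ^ (i / 2) * t

lemma zz_even (s t : ℂ) (m : ℕ) : zz s t (2 * m) = (-1) ^ m * s := by
  simp [zz]

lemma zz_odd (s t : ℂ) (m : ℕ) : zz s t (2 * m + 1) = (-1) ^ m * t := by
  have : (2 * m + 1) / 2 = m := by omega
  simp [zz, this]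

lemma zz_zero (s t : ℂ) : zz s t 0 = s := by simpa using zz_even s t 0
lemma zz_one (s t : ℂ) : zz s t 1 = t := by simpa using zz_odd s t 0

lemma zz_add_two (s t : ℂ) (i : ℕ) : zz s t (i + 2) = - zz s t i := by
  rcases Nat.even_or_odd' i with ⟨m, rfl | rfl⟩
  · rw [show 2 * m + 2 = 2 * (m + 1) by ring, zz_even, zz_even]; ring
  · rw [show 2 * m + 1 + 2 = 2 * (m + 1) + 1 by ring, zz_odd, zz_odd]; ring

lemma zz_unique (z : ℕ → ℂ) (n : ℕ) (h : ∀ i, 0 < i → i < n → z (i - 1) + z (i + 1) = 0) :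
    ∀ i, i ≤ n → z i = zz (z 0) (z 1) i := by
  intro i
  induction i using Nat.strong_induction_on with
  | _ i ih =>
    intro hi
    match i, ih, hi with
    | 0, _, _ => rw [zz_zero]
    | 1, _, _ => rw [zz_one]
    | j + 2, ih, hi =>
      rw [zz_add_two, ← ih j (by omega) (by omega)]
      have := h (j + 1) (by omega) (by omega)
      simp only [Nat.add_sub_cancel] at this
      exact eq_neg_of_add_eq_zero_right this

/-- Partial products of weights. -/
noncomputable def gg (h : ℕ → ℂ) (i : ℕ) : ℂ := ∏ j ∈ Finset.range i, h j

lemma gg_succ (h : ℕ → ℂ) (i : ℕ) : gg h (i + 1) = gg h i * h i := Finset.prod_range_succ _ _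
lemma gg_zero (h : ℕ → ℂ) : gg h 0 = 1 := rfl

lemma gg_ne (h : ℕ → ℂ) (hh : ∀ i, h i ≠ 0) (i : ℕ) : gg h i ≠ 0 :=
  Finset.prod_ne_zero_iff.2 fun j _ => hh j

/-- Gauge transformation of the path equations. -/
lemma gauge (h : ℕ → ℂ) (hh : ∀ i, h i ≠ 0) (Y : ℕ → ℂ) (i : ℕ) (hi : 0 < i) :
    (h (i - 1))⁻¹ * Y (i - 1) + h i * Y (i + 1) = 0 ↔
      gg h (i - 1) * Y (i - 1) + gg h (i + 1) * Y (i + 1) = 0 := by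
  obtain ⟨j, rfl⟩ : ∃ j, i = j + 1 := ⟨i - 1, by omega⟩
  simp only [Nat.add_sub_cancel]
  rw [gg_succ, gg_succ]
  have h1 := gg_ne h hh j
  have h2 := hh j
  have : gg h j * Y j + gg h j * h j * h (j + 1) * Y (j + 1 + 1) =
    (gg h j * h j) * ((h j)⁻¹ * Y j + h (j + 1) * Y (j + 1 + 1)) := by
    field_simp
  rw [this, mul_eq_zero]
  simp [h1, h2]


/-- The system of kernel equations for the infinity graph. -/
def KerEq (p q : ℕ) (a b : ℕ → V) (h k : ℕ → ℂ) (y : V → ℂ) : Prop :=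
  (∀ i, 0 < i → i < p → (h (i - 1))⁻¹ * y (a (i - 1)) + h i * y (a (i + 1)) = 0) ∧
  (∀ i, 0 < i → i < q → (k (i - 1))⁻¹ * y (b (i - 1)) + k i * y (b (i + 1)) = 0) ∧
  h 0 * y (a 1) + (h (p - 1))⁻¹ * y (a (p - 1)) + (k 0 * y (b 1) + (k (q - 1))⁻¹ * y (b (q - 1))) = 0

lemma end_term (h : ℕ → ℂ) (hh : ∀ i, h i ≠ 0) (Y : ℂ) (p : ℕ) :
    (h p)⁻¹ * Y = (gg h (p + 1))⁻¹ * (gg h p * Y) := by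
  rw [gg_succ]
  have h1 := gg_ne h hh p
  have h2 := hh p
  field_simp

lemma neg_one_sq' (m : ℕ) : ((-1 : ℂ) ^ m) * (-1) ^ m = 1 := by
  rw [← mul_pow]; simp

section
variable (m n : ℕ) (a b : ℕ → V) (x : V) (h k : ℕ → ℂ)

lemma ker_necessary (hh : ∀ i, h i ≠ 0) (hk : ∀ i, k i ≠ 0)
    (ha0 : a 0 = x) (hap : a (2 * m + 2) = x) (hb0 : b 0 = x) (hbq : b (2 * n + 1) = x)
    (y : V → ℂ) (hy : KerEq (2 * m + 2) (2 * n + 1) a b h k y) :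
    (∀ i, i ≤ 2 * m + 2 → gg h i * y (a i) = zz (y x) (h 0 * y (a 1)) i) ∧
    (∀ i, i ≤ 2 * n + 1 → gg k i * y (b i) = zz (y x) ((-1) ^ n * gg k (2 * n + 1) * y x) i) ∧
    gg h (2 * m + 2) * y x = (-1) ^ (m + 1) * y x ∧
    h 0 * y (a 1) * (1 - (gg h (2 * m + 2))⁻¹ * (-1) ^ (m + 1)) +
      (-1) ^ n * (gg k (2 * n + 1) + (gg k (2 * n + 1))⁻¹) * y x = 0 := by
  obtain ⟨h1, h2, h3⟩ := hy
  have A := zz_unique (fun i => gg h i * y (a i)) (2 * m + 2)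
    (fun i hi hi' => (gauge h hh (fun i => y (a i)) i hi).1 (h1 i hi hi'))
  have B := zz_unique (fun i => gg k i * y (b i)) (2 * n + 1)
    (fun i hi hi' => (gauge k hk (fun i => y (b i)) i hi).1 (h2 i hi hi'))
  simp only [gg_succ _ 0, gg_zero, one_mul, ha0, hb0] at A B
  have A1 := A _ le_rfl
  rw [hap, show 2 * m + 2 = 2 * (m + 1) by ring, zz_even] at A1
  have B1 := B _ le_rfl
  rw [hbq, zz_odd] at B1
  have B2 : k 0 * y (b 1) = (-1) ^ n * gg k (2 * n + 1) * y x := by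
    rw [mul_assoc, B1, ← mul_assoc, neg_one_sq', one_mul]
  rw [B2] at B
  refine ⟨A, B, A1, ?_⟩
  rw [show 2 * m + 2 - 1 = 2 * m + 1 by omega, show 2 * n + 1 - 1 = 2 * n by omega,
    end_term h hh, end_term k hk, A _ (by omega), B _ (by omega), zz_odd, zz_even, B2] at h3
  rw [← h3]
  ring

lemma ker_exists (hh : ∀ i, h i ≠ 0) (hk : ∀ i, k i ≠ 0)
    (ha0 : a 0 = x) (hap : a (2 * m + 2) = x) (hb0 : b 0 = x) (hbq : b (2 * n + 1) = x)
    (hai : ∀ i j, i < 2 * m + 2 → j < 2 * m + 2 → a i = a j → i = j)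
    (hbi : ∀ i j, i < 2 * n + 1 → j < 2 * n + 1 → b i = b j → i = j)
    (hab : ∀ i j, i < 2 * m + 2 → j < 2 * n + 1 → a i = b j → i = 0 ∧ j = 0)
    (s t : ℂ) (h1 : gg h (2 * m + 2) * s = (-1) ^ (m + 1) * s)
    (h2 : t * (1 - (gg h (2 * m + 2))⁻¹ * (-1) ^ (m + 1)) +
      (-1) ^ n * (gg k (2 * n + 1) + (gg k (2 * n + 1))⁻¹) * s = 0) :
    ∃ y, KerEq (2 * m + 2) (2 * n + 1) a b h k y ∧ y x = s ∧ h 0 * y (a 1) = t := by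
  let y : V → ℂ := fun v => if H : ∃ i, i < 2 * m + 2 ∧ a i = v then
      (gg h H.choose)⁻¹ * zz s t H.choose else
      if H : ∃ i, i < 2 * n + 1 ∧ b i = v then
      (gg k H.choose)⁻¹ * zz s ((-1) ^ n * gg k (2 * n + 1) * s) H.choose else 0
  have ya' : ∀ i, i < 2 * m + 2 → y (a i) = (gg h i)⁻¹ * zz s t i := by
    intro i hi
    have H : ∃ i', i' < 2 * m + 2 ∧ a i' = a i := ⟨i, hi, rfl⟩
    simp only [y]
    rw [dif_pos H, hai _ _ H.choose_spec.1 hi H.choose_spec.2]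
  have yx : y x = s := by
    rw [← ha0, ya' 0 (by omega), zz_zero, gg_zero]; simp
  have yb' : ∀ i, i < 2 * n + 1 → y (b i) =
      (gg k i)⁻¹ * zz s ((-1) ^ n * gg k (2 * n + 1) * s) i := by
    intro i hi
    by_cases hi0 : i = 0
    · subst hi0
      rw [hb0, yx, zz_zero, gg_zero]; simp
    have H' : ¬ ∃ i', i' < 2 * m + 2 ∧ a i' = b i := by
      rintro ⟨j, hj, hj'⟩
      exact hi0 (hab _ _ hj hi hj').2
    have H : ∃ i', i' < 2 * n + 1 ∧ b i' = b i := ⟨i, hi, rfl⟩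
    simp only [y]
    rw [dif_neg H', dif_pos H, hbi _ _ H.choose_spec.1 hi H.choose_spec.2]
  have ya : ∀ i, i ≤ 2 * m + 2 → gg h i * y (a i) = zz s t i := by
    intro i hi
    rcases hi.lt_or_eq with hi | rfl
    · rw [ya' i hi, mul_inv_cancel_left₀ (gg_ne h hh i)]
    · rw [hap, yx, h1, show 2 * m + 2 = 2 * (m + 1) by ring, zz_even]
  have yb : ∀ i, i ≤ 2 * n + 1 → gg k i * y (b i) =
      zz s ((-1) ^ n * gg k (2 * n + 1) * s) i := by
    intro i hi
    rcases hi.lt_or_eq with hi | rfl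
    · rw [yb' i hi, mul_inv_cancel_left₀ (gg_ne k hk i)]
    · rw [hbq, yx, zz_odd, mul_assoc, ← mul_assoc, neg_one_sq', one_mul]
  have ya1 : h 0 * y (a 1) = t := by
    have := ya 1 (by omega)
    rwa [gg_succ, gg_zero, one_mul, zz_one] at this
  have yb1 : k 0 * y (b 1) = (-1) ^ n * gg k (2 * n + 1) * s := by
    have := yb 1 (by omega)
    rwa [gg_succ, gg_zero, one_mul, zz_one] at this
  refine ⟨y, ⟨?_, ?_, ?_⟩, yx, ya1⟩
  · intro i hi hi'
    rw [gauge h hh (fun i => y (a i)) i hi, ya _ (by omega), ya _ (by omega),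
      show i + 1 = i - 1 + 2 by omega, zz_add_two]
    ring
  · intro i hi hi'
    rw [gauge k hk (fun i => y (b i)) i hi, yb _ (by omega), yb _ (by omega),
      show i + 1 = i - 1 + 2 by omega, zz_add_two]
    ring
  · rw [show 2 * m + 2 - 1 = 2 * m + 1 by omega, show 2 * n + 1 - 1 = 2 * n by omega,
      end_term h hh, end_term k hk, ya _ (by omega), yb _ (by omega), zz_odd, zz_even, ya1, yb1]
    rw [← h2]
    ring

/-- Nullity criterion. -/
lemma nullity_one (hh : ∀ i, h i ≠ 0) (hk : ∀ i, k i ≠ 0)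
    (ha0 : a 0 = x) (hap : a (2 * m + 2) = x) (hb0 : b 0 = x) (hbq : b (2 * n + 1) = x)
    (hai : ∀ i j, i < 2 * m + 2 → j < 2 * m + 2 → a i = a j → i = j)
    (hbi : ∀ i j, i < 2 * n + 1 → j < 2 * n + 1 → b i = b j → i = j)
    (hab : ∀ i j, i < 2 * m + 2 → j < 2 * n + 1 → a i = b j → i = 0 ∧ j = 0)
    (hcov : ∀ v, (∃ i, i < 2 * m + 2 ∧ a i = v) ∨ (∃ i, i < 2 * n + 1 ∧ b i = v))
    (K : Submodule ℂ (V → ℂ))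
    (hK : ∀ y, y ∈ K ↔ KerEq (2 * m + 2) (2 * n + 1) a b h k y) :
    Module.finrank ℂ K = 1 ↔ gg h (2 * m + 2) = (-1) ^ (m + 1) ∧
      gg k (2 * n + 1) + (gg k (2 * n + 1))⁻¹ ≠ 0 := by
  have nec := fun y hy => ker_necessary m n a b x h k hh hk ha0 hap hb0 hbq y ((hK y).1 hy)
  have ex := ker_exists m n a b x h k hh hk ha0 hap hb0 hbq hai hbi hab
  have uniq : ∀ y ∈ K, y x = 0 → y (a 1) = 0 → y = 0 := by
    intro y hy h0 h1
    obtain ⟨A, B, -, -⟩ := nec y hy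
    funext v
    have z0 : ∀ i, zz 0 0 i = 0 := by intro i; simp [zz]
    rcases hcov v with ⟨i, hi, rfl⟩ | ⟨i, hi, rfl⟩
    · have := A i hi.le
      rw [h0, h1, mul_zero, z0] at this
      simpa [gg_ne h hh i] using this
    · have := B i hi.le
      rw [h0, mul_zero, z0] at this
      simpa [gg_ne k hk i] using this
  have hsgn : ((-1 : ℂ) ^ (m + 1)) ≠ 0 := pow_ne_zero _ (by norm_num)
  have hsn : ((-1 : ℂ) ^ n) ≠ 0 := pow_ne_zero _ (by norm_num)
  have hW := gg_ne h hh (2 * m + 2)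
  by_cases c1 : gg h (2 * m + 2) = (-1) ^ (m + 1)
  · have c1' : 1 - (gg h (2 * m + 2))⁻¹ * (-1) ^ (m + 1) = 0 := by
      rw [c1, inv_mul_cancel₀ hsgn, sub_self]
    rw [c1'] at nec ex
    by_cases c2 : gg k (2 * n + 1) + (gg k (2 * n + 1))⁻¹ = 0
    · simp only [c2, ne_eq, not_true, and_false, iff_false]
      intro hf
      rw [finrank_eq_one_iff'] at hf
      obtain ⟨v, -, hv⟩ := hf
      obtain ⟨y1, k1, u1, w1⟩ := ex 1 0 (by rw [c1]) (by rw [c2]; ring)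
      obtain ⟨y2, k2, u2, w2⟩ := ex 0 1 (by simp) (by ring)
      obtain ⟨e1, he1⟩ := hv ⟨y1, (hK _).2 k1⟩
      obtain ⟨e2, he2⟩ := hv ⟨y2, (hK _).2 k2⟩
      have E1 : ∀ v', e1 * v.1 v' = y1 v' := fun v' => congrFun (congrArg Subtype.val he1) v'
      have E2 : ∀ v', e2 * v.1 v' = y2 v' := fun v' => congrFun (congrArg Subtype.val he2) v'
      rw [← E1] at u1 w1
      rw [← E2] at u2 w2
      have : e2 = 0 := by
        have : v.1 x ≠ 0 := by rintro h; simp [h] at u1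
        simpa [this] using u2
      simp [this] at w2
    · simp only [c1, c2, ne_eq, not_false_eq_true, and_self, iff_true]
      obtain ⟨y2, k2, u2, w2⟩ := ex 0 1 (by simp) (by ring)
      refine finrank_eq_one (⟨y2, (hK _).2 k2⟩ : K) ?_ ?_
      · intro h
        have : y2 = 0 := congrArg Subtype.val h
        simp [this] at w2
      · rintro ⟨y, hy⟩
        refine ⟨h 0 * y (a 1), ?_⟩
        obtain ⟨-, -, -, F⟩ := nec y hy
        have yx : y x = 0 := by
          simpa [hsn, c2] using F
        have := uniq ((h 0 * y (a 1)) • y2 - y) (K.sub_mem (K.smul_mem _ ((hK _).2 k2)) hy)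
          (by simp [u2, yx]) (by
            simp only [Pi.sub_apply, Pi.smul_apply, smul_eq_mul]
            linear_combination (y (a 1)) * w2)
        exact Subtype.ext (sub_eq_zero.1 this)
  · simp only [c1, false_and, iff_false]
    have : K = ⊥ := by
      rw [Submodule.eq_bot_iff]
      intro y hy
      obtain ⟨-, -, E, F⟩ := nec y hy
      have yx : y x = 0 := by
        have : (gg h (2 * m + 2) - (-1) ^ (m + 1)) * y x = 0 := by rw [sub_mul, E, sub_self]
        simpa [sub_eq_zero, c1] using this
      refine uniq y hy yx ?_
      rw [yx, mul_zero, add_zero, mul_assoc, mul_eq_zero, mul_eq_zero] at F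
      rcases F with F | F | F
      · exact absurd F (hh 0)
      · exact F
      · exfalso
        apply c1
        field_simp at F
        linear_combination F
    rw [this]; simp
end

open SimpleGraph in
lemma exists_cycle_walk [Finite V] {G : SimpleGraph V} (C : G.Subgraph) (hC : IsCycleSubgraph C)
    (x : V) (hx : x ∈ C.verts) : ∃ w : G.Walk x x, w.IsCycle ∧ w.toSubgraph = C := by
  have := Fintype.ofFinite V
  have hn : ∀ v : C.verts, (C.coe.neighborSet v).ncard = 2 := by
    intro v
    rw [← hC.2 v.1 v.2, ← Set.ncard_image_of_injective _ Subtype.val_injective]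
    congr 1
    ext w
    constructor
    · rintro ⟨w', hw', rfl⟩
      exact hw'
    · intro hw
      exact ⟨⟨w, C.edge_vert (C.adj_symm hw)⟩, hw, rfl⟩
  have hcyc : C.coe.IsCycles := fun v _ => hn v
  obtain ⟨w, hw, hv⟩ := hcyc.exists_cycle_toSubgraph_verts_eq_connectedComponentSupp
    (v := ⟨x, hx⟩) (c := C.coe.connectedComponentMk ⟨x, hx⟩) rfl
    (Set.nonempty_of_ncard_ne_zero (by rw [hn]; norm_num))
  have htop : w.toSubgraph = ⊤ := by
    have hall : ∀ v, v ∈ w.toSubgraph.verts := by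
      intro v
      rw [hv]
      exact ConnectedComponent.sound (hC.1.coe.preconnected v ⟨x, hx⟩)
    ext v u
    · simp only [hall v, Subgraph.verts_top, Set.mem_univ]
    · rw [hw.adj_toSubgraph_iff_of_isCycles hcyc (hall v)]
      simp
  refine ⟨w.map C.hom, ?_, ?_⟩
  · exact (Walk.isCycle_map_iff_of_injective Subtype.val_injective).2 hw
  · have := Walk.toSubgraph_map C.hom w
    rw [htop] at this
    refine this.trans ?_
    ext v u
    · simp
    · simp only [Subgraph.map_adj, Relation.Map]
      constructor
      · rintro ⟨v', u', h, rfl, rfl⟩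
        exact h
      · intro h
        exact ⟨⟨v, C.edge_vert h⟩, ⟨u, C.edge_vert (C.adj_symm h)⟩, h, rfl, rfl⟩

open SimpleGraph in
lemma toSubgraph_eq_iff {G : SimpleGraph V} (C : G.Subgraph) {x : V} (w : G.Walk x x) :
    w.toSubgraph = C ↔ {v | v ∈ w.support} = C.verts ∧ {e | e ∈ w.edges} = C.edgeSet := by
  constructor
  · rintro rfl
    exact ⟨(Walk.verts_toSubgraph w).symm, by rw [Walk.edgeSet_toSubgraph]; rfl⟩
  · rintro ⟨h1, h2⟩
    ext v u
    · rw [← h1]; simp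
    · rw [← Subgraph.mem_edgeSet, ← Subgraph.mem_edgeSet, ← h2, Walk.edgeSet_toSubgraph]; rfl

open SimpleGraph in
lemma walkSignature_rotate (M : MixedGraph V) {u v : V} (w : M.graph.Walk u u)
    (h : v ∈ w.support) : walkSignature M (w.rotate v h) = walkSignature M w := by
  unfold walkSignature
  have := (w.rotate_darts v h).perm
  rw [this.countP_eq, this.countP_eq]

lemma cycleSig_iff (M : MixedGraph V) (C : M.graph.Subgraph) (P : ℕ → Prop) (x : V)
    (hx : x ∈ C.verts) : CycleSig M C P ↔
    ∃ w : M.graph.Walk x x, w.IsCycle ∧ w.toSubgraph = C ∧ P (walkSignature M w) := by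
  constructor
  · rintro ⟨u, w, hw, h1, h2, h3⟩
    have hC := (toSubgraph_eq_iff C w).2 ⟨h1, h2⟩
    have hx' : x ∈ w.support := by rw [← h1] at hx; exact hx
    refine ⟨w.rotate x hx', ?_, ?_, ?_⟩
    · simpa using hw
    · rw [SimpleGraph.Walk.toSubgraph_rotate, hC]
    · rwa [walkSignature_rotate]
  · rintro ⟨w, hw, h1, h2⟩
    obtain ⟨h3, h4⟩ := (toSubgraph_eq_iff C w).1 h1
    exact ⟨x, w, hw, h3, h4, h2⟩

section
variable [Fintype V] [DecidableEq V] (M : MixedGraph V)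

lemma hMatrix_adj {u v : V} (h : M.graph.Adj u v) : M.hMatrix u v =
    Complex.I ^ ((if M.arc u v then 1 else 0 : ℤ) - (if M.arc v u then 1 else 0)) := by
  unfold MixedGraph.hMatrix
  by_cases h1 : M.arc u v
  · have := M.arc_antisymm _ _ h1
    simp [h1, this]
  · by_cases h2 : M.arc v u
    · simp [h1, h2]
    · simp [h1, h2, h]

lemma hMatrix_ne_zero {u v : V} (h : M.graph.Adj u v) : M.hMatrix u v ≠ 0 := by
  rw [hMatrix_adj M h]
  exact zpow_ne_zero _ Complex.I_ne_zero

lemma hMatrix_inv {u v : V} (h : M.graph.Adj u v) : M.hMatrix v u = (M.hMatrix u v)⁻¹ := by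
  rw [hMatrix_adj M h, hMatrix_adj M h.symm, ← zpow_neg, neg_sub]

lemma hMatrix_not_adj {u v : V} (h : ¬ M.graph.Adj u v) : M.hMatrix u v = 0 := by
  have h1 : ¬ M.arc u v := fun h' => h (M.arc_adj _ _ h')
  have h2 : ¬ M.arc v u := fun h' => h (M.arc_adj _ _ h').symm
  unfold MixedGraph.hMatrix
  simp [h, h1, h2]

lemma walk_prod {u v : V} (w : M.graph.Walk u v) :
    ∏ i ∈ Finset.range w.length, M.hMatrix (w.getVert i) (w.getVert (i + 1)) =
    Complex.I ^ ((w.darts.countP fun d => M.arc d.toProd.1 d.toProd.2 : ℤ) -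
    (w.darts.countP fun d => M.arc d.toProd.2 d.toProd.1 : ℤ)) := by
  induction w with
  | nil => simp
  | cons h p ih =>
    rw [SimpleGraph.Walk.length_cons, Finset.prod_range_succ']
    simp only [SimpleGraph.Walk.getVert_cons_succ, SimpleGraph.Walk.getVert_zero, ih,
      hMatrix_adj M h, SimpleGraph.Walk.darts_cons, List.countP_cons]
    rw [← zpow_add₀ Complex.I_ne_zero]
    congr 1
    push_cast
    ring
end

lemma I_zpow_mod (z : ℤ) : Complex.I ^ z = Complex.I ^ (z % 4) := by
  conv_lhs => rw [← Int.emod_add_mul_ediv z 4]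
  rw [zpow_add₀ Complex.I_ne_zero, zpow_mul]
  have : Complex.I ^ (4 : ℤ) = 1 := by
    rw [show (4 : ℤ) = ((4 : ℕ) : ℤ) by norm_num, zpow_natCast, Complex.I_pow_four]
  simp [this]

lemma I_zpow_cases (z : ℤ) : (z % 4 = 0 ∧ Complex.I ^ z = 1) ∨ (z % 4 = 1 ∧ Complex.I ^ z = Complex.I)
    ∨ (z % 4 = 2 ∧ Complex.I ^ z = -1) ∨ (z % 4 = 3 ∧ Complex.I ^ z = -Complex.I) := by
  have h : z % 4 = 0 ∨ z % 4 = 1 ∨ z % 4 = 2 ∨ z % 4 = 3 := by omega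
  rw [I_zpow_mod]
  rcases h with h | h | h | h <;> rw [h]
  · simp
  · simp
  · right; right; left
    exact ⟨rfl, by rw [show (2 : ℤ) = ((2 : ℕ) : ℤ) by norm_num, zpow_natCast, Complex.I_sq]⟩
  · right; right; right
    exact ⟨rfl, by rw [show (3 : ℤ) = ((3 : ℕ) : ℤ) by norm_num, zpow_natCast, Complex.I_pow_three]⟩

lemma even_weight (z : ℤ) (m : ℕ) :
    Complex.I ^ z = (-1) ^ (m + 1) ↔ z.natAbs % 4 = (2 * m + 2) % 4 := by
  have i1 : Complex.I ≠ 1 := by intro h; simpa using congrArg Complex.re h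
  have i2 : Complex.I ≠ -1 := by intro h; simpa using congrArg Complex.re h
  have i3 : -Complex.I ≠ 1 := by intro h; simpa using congrArg Complex.re h
  have i5 : (1 : ℂ) ≠ -1 := by norm_num
  have i6 : (-1 : ℂ) ≠ 1 := by norm_num
  rcases Nat.even_or_odd' m with ⟨r, rfl | rfl⟩
  · have e : ((-1 : ℂ)) ^ (2 * r + 1) = -1 := by rw [pow_succ, pow_mul]; simp
    rw [e]
    rcases I_zpow_cases z with ⟨h, h'⟩ | ⟨h, h'⟩ | ⟨h, h'⟩ | ⟨h, h'⟩ <;> rw [h'] <;>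
      simp only [i2, i5, neg_inj, i1, false_iff, true_iff] <;> omega
  · have e : ((-1 : ℂ)) ^ (2 * r + 1 + 1) = 1 := by
      rw [show 2 * r + 1 + 1 = 2 * (r + 1) by ring, pow_mul]; simp
    rw [e]
    rcases I_zpow_cases z with ⟨h, h'⟩ | ⟨h, h'⟩ | ⟨h, h'⟩ | ⟨h, h'⟩ <;> rw [h'] <;>
      simp only [i1, i6, i3, false_iff, true_iff] <;> omega

lemma odd_weight (z : ℤ) :
    Complex.I ^ z + (Complex.I ^ z)⁻¹ ≠ 0 ↔ Even z.natAbs := by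
  rw [Nat.even_iff]
  rcases I_zpow_cases z with ⟨h, h'⟩ | ⟨h, h'⟩ | ⟨h, h'⟩ | ⟨h, h'⟩ <;> rw [h']
  · have : z.natAbs % 2 = 0 := by omega
    norm_num [this]
  · have : ¬ z.natAbs % 2 = 0 := by omega
    simp [this]
  · have : z.natAbs % 2 = 0 := by omega
    norm_num [this]
  · have : ¬ z.natAbs % 2 = 0 := by omega
    simp [this, inv_neg]

section
variable {G : SimpleGraph V} {C : G.Subgraph} {x : V} {w : G.Walk x x}

lemma cyc_inj (hw : w.IsCycle) : ∀ i j, i < w.length → j < w.length →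
    w.getVert i = w.getVert j → i = j := by
  intro i j hi hj h
  exact hw.getVert_injOn' (show i ≤ w.length - 1 by omega) (show j ≤ w.length - 1 by omega) h

lemma cyc_cover (hw : w.IsCycle) (hC : w.toSubgraph = C) {v : V} (hv : v ∈ C.verts) :
    ∃ i, i < w.length ∧ w.getVert i = v := by
  rw [← hC, SimpleGraph.Walk.mem_verts_toSubgraph,
    SimpleGraph.Walk.mem_support_iff_exists_getVert] at hv
  obtain ⟨i, rfl, hi⟩ := hv
  have h3 := hw.three_le_length
  rcases hi.lt_or_eq with hi | rfl
  · exact ⟨i, hi, rfl⟩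
  · exact ⟨0, by omega, by simp⟩

lemma cyc_mem (hC : w.toSubgraph = C) (i : ℕ) : w.getVert i ∈ C.verts := by
  rw [← hC, SimpleGraph.Walk.mem_verts_toSubgraph]
  exact w.getVert_mem_support i

lemma cyc_length (hw : w.IsCycle) (hC : w.toSubgraph = C) : w.length = C.verts.ncard := by
  have : C.verts = w.getVert '' (Finset.range w.length : Set ℕ) := by
    ext v
    constructor
    · intro hv
      obtain ⟨i, hi, rfl⟩ := cyc_cover hw hC hv
      exact ⟨i, by simpa using hi, rfl⟩
    · rintro ⟨i, -, rfl⟩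
      exact cyc_mem hC i
  rw [this, Set.InjOn.ncard_image, Set.ncard_coe_finset, Finset.card_range]
  intro i hi j hj h
  exact cyc_inj hw i j (by simpa using hi) (by simpa using hj) h

lemma cyc_adj (hC : w.toSubgraph = C) (i : ℕ) (hi : i < w.length) :
    C.Adj (w.getVert i) (w.getVert (i + 1)) := by
  rw [← hC]; exact w.toSubgraph_adj_getVert hi

lemma cyc_nbr (hw : w.IsCycle) (hC : w.toSubgraph = C) (i : ℕ) (hi : 0 < i) (hi' : i < w.length)
    (v : V) : C.Adj (w.getVert i) v ↔ v = w.getVert (i - 1) ∨ v = w.getVert (i + 1) := by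
  have := hw.neighborSet_toSubgraph_internal (i := i) (by omega) hi'
  rw [hC] at this
  exact Set.ext_iff.1 this v

lemma cyc_nbr_zero (hw : w.IsCycle) (hC : w.toSubgraph = C)
    (v : V) : C.Adj x v ↔ v = w.getVert 1 ∨ v = w.getVert (w.length - 1) := by
  have := hw.neighborSet_toSubgraph_endpoint
  rw [hC] at this
  exact Set.ext_iff.1 this v

lemma cyc_ne (hw : w.IsCycle) (i : ℕ) (hi : 0 < i) (hi' : i < w.length) : w.getVert i ≠ x := by
  intro h
  have := cyc_inj hw i 0 hi' (by omega) (by simpa using h)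
  omega

end

/-- Two cycle subgraphs sharing exactly the vertex `x` and covering the graph. -/
structure Inf (G : SimpleGraph V) (C₁ C₂ : G.Subgraph) (x : V) : Prop where
  c1 : IsCycleSubgraph C₁
  c2 : IsCycleSubgraph C₂
  inter : ∀ v, v ∈ C₁.verts ∧ v ∈ C₂.verts ↔ v = x
  sup : C₁ ⊔ C₂ = ⊤

section
variable {G : SimpleGraph V} {C₁ C₂ : G.Subgraph} {x : V}

lemma Inf.swap (h : Inf G C₁ C₂ x) : Inf G C₂ C₁ x :=
  ⟨h.c2, h.c1, fun v => by rw [and_comm]; exact h.inter v, by rw [sup_comm]; exact h.sup⟩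

lemma Inf.adj (h : Inf G C₁ C₂ x) (u v : V) : G.Adj u v ↔ C₁.Adj u v ∨ C₂.Adj u v := by
  have := congrArg (fun C => C.Adj u v) h.sup
  simp only [SimpleGraph.Subgraph.sup_adj, SimpleGraph.Subgraph.top_adj] at this
  rw [← this]

lemma Inf.cover (h : Inf G C₁ C₂ x) (v : V) : v ∈ C₁.verts ∨ v ∈ C₂.verts := by
  have : v ∈ (C₁ ⊔ C₂).verts := by rw [h.sup]; trivial
  simpa using this

lemma Inf.adj_left (h : Inf G C₁ C₂ x) {u : V} (hu : u ∈ C₁.verts) (hx : u ≠ x) (v : V) :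
    G.Adj u v ↔ C₁.Adj u v := by
  rw [h.adj]
  constructor
  · rintro (h' | h')
    · exact h'
    · exact absurd ((h.inter u).1 ⟨hu, C₂.edge_vert h'⟩) hx
  · exact Or.inl

lemma Inf.mem1 (h : Inf G C₁ C₂ x) : x ∈ C₁.verts := ((h.inter x).2 rfl).1
lemma Inf.mem2 (h : Inf G C₁ C₂ x) : x ∈ C₂.verts := ((h.inter x).2 rfl).2

lemma Inf.nbr_eq [Finite V] (h : Inf G C₁ C₂ x) {C : G.Subgraph} (hC : IsCycleSubgraph C)
    {u : V} (hu : u ∈ C₁.verts) (hx : u ≠ x) (huC : u ∈ C.verts) (v : V) :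
    C.Adj u v ↔ C₁.Adj u v := by
  have : {v | C.Adj u v} = {v | C₁.Adj u v} := by
    apply Set.eq_of_subset_of_ncard_le
    · intro v hv
      exact (h.adj_left hu hx v).1 (C.adj_sub hv)
    · rw [hC.2 u huC, h.c1.2 u hu]
    · exact Set.toFinite _
  exact Set.ext_iff.1 this v

lemma Inf.le_of_mem [Finite V] (h : Inf G C₁ C₂ x) {C : G.Subgraph} (hC : IsCycleSubgraph C)
    {u : V} (hu : u ∈ C₁.verts) (hx : u ≠ x) (huC : u ∈ C.verts) : C₁ ≤ C := by
  obtain ⟨w, hw, hwC⟩ := exists_cycle_walk C₁ h.c1 x h.mem1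
  obtain ⟨j, hj, rfl⟩ := cyc_cover hw hwC hu
  have hj0 : 0 < j := by
    rcases Nat.eq_zero_or_pos j with rfl | h'
    · simp at hx
    · exact h'
  have step : ∀ i, 0 < i → i < w.length → w.getVert i ∈ C.verts →
      w.getVert (i - 1) ∈ C.verts ∧ w.getVert (i + 1) ∈ C.verts := by
    intro i hi hi' hm
    have e := h.nbr_eq hC (cyc_mem hwC i) (cyc_ne hw i hi hi') hm
    constructor
    · exact C.edge_vert (C.adj_symm ((e _).2 ((cyc_nbr hw hwC i hi hi' _).2 (Or.inl rfl))))
    · exact C.edge_vert (C.adj_symm ((e _).2 ((cyc_nbr hw hwC i hi hi' _).2 (Or.inr rfl))))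
  have up : ∀ d, j + d ≤ w.length → w.getVert (j + d) ∈ C.verts := by
    intro d
    induction d with
    | zero => intro _; exact huC
    | succ d ih => intro hd; exact (step (j + d) (by omega) (by omega) (ih (by omega))).2
  have down : ∀ d, d ≤ j → w.getVert (j - d) ∈ C.verts := by
    intro d
    induction d with
    | zero => intro _; exact huC
    | succ d ih => intro hd; exact (step (j - d) (by omega) (by omega) (ih (by omega))).1
  have all : ∀ v ∈ C₁.verts, v ∈ C.verts := by
    intro v hv
    obtain ⟨i, hi, rfl⟩ := cyc_cover hw hwC hv
    rcases le_total i j with hij | hij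
    · have := down (j - i) (by omega)
      rwa [show j - (j - i) = i by omega] at this
    · have := up (i - j) (by omega)
      rwa [show j + (i - j) = i by omega] at this
  refine ⟨all, ?_⟩
  intro u v huv
  by_cases hux : u = x
  · have hvx : v ≠ x := by rintro rfl; exact huv.ne hux
    have hv := C₁.edge_vert (C₁.adj_symm huv)
    exact C.adj_symm ((h.nbr_eq hC hv hvx (all v hv) u).2 (C₁.adj_symm huv))
  · have hv := C₁.edge_vert huv
    exact (h.nbr_eq hC hv hux (all u hv) v).2 huv

lemma Inf.eq_of_mem [Finite V] (h : Inf G C₁ C₂ x) {C : G.Subgraph} (hC : IsCycleSubgraph C)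
    {u : V} (hu : u ∈ C₁.verts) (hx : u ≠ x) (huC : u ∈ C.verts) : C = C₁ := by
  have hle := h.le_of_mem hC hu hx huC
  have nb : ∀ u ∈ C₁.verts, ∀ v, C.Adj u v ↔ C₁.Adj u v := by
    intro u hu v
    have : {v | C₁.Adj u v} = {v | C.Adj u v} := by
      apply Set.eq_of_subset_of_ncard_le
      · intro v hv
        exact hle.2 hv
      · rw [hC.2 u (hle.1 hu), h.c1.2 u hu]
      · exact Set.toFinite _
    exact (Set.ext_iff.1 this v).symm
  have sub : ∀ v ∈ C.verts, v ∈ C₁.verts := by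
    intro v hv
    by_contra hv1
    have hv2 : v ∈ C₂.verts := (h.cover v).resolve_left hv1
    have hle2 := h.swap.le_of_mem hC hv2 (by rintro rfl; exact hv1 h.mem1) hv
    have hne : {v | C₂.Adj x v}.Nonempty :=
      Set.nonempty_of_ncard_ne_zero (by rw [h.c2.2 x h.mem2]; norm_num)
    obtain ⟨y, hy⟩ := hne
    have hy1 := (nb x h.mem1 y).1 (hle2.2 hy)
    have := (h.inter y).1 ⟨C₁.edge_vert (C₁.adj_symm hy1), C₂.edge_vert (C₂.adj_symm hy)⟩
    exact hy1.ne this.symm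
  ext u v
  · exact ⟨sub u, fun h => hle.1 h⟩
  · exact ⟨fun h' => (nb u (sub u (C.edge_vert h')) v).1 h', fun h' => hle.2 h'⟩

lemma Inf.classify [Finite V] (h : Inf G C₁ C₂ x) {C : G.Subgraph} (hC : IsCycleSubgraph C) :
    C = C₁ ∨ C = C₂ := by
  obtain ⟨u, hu, hux⟩ : ∃ u ∈ C.verts, u ≠ x := by
    obtain ⟨u, hu⟩ := hC.1.nonempty
    by_cases hux : u = x
    · have hne : {v | C.Adj u v}.Nonempty :=
        Set.nonempty_of_ncard_ne_zero (by rw [hC.2 u hu]; norm_num)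
      obtain ⟨y, hy⟩ := hne
      exact ⟨y, C.edge_vert (C.adj_symm hy), by rintro rfl; exact hy.ne hux⟩
    · exact ⟨u, hu, hux⟩
  rcases h.cover u with h1 | h1
  · exact Or.inl (h.eq_of_mem hC h1 hux hu)
  · exact Or.inr (h.swap.eq_of_mem hC h1 hux hu)

end

lemma matching_card [Finite V] {G : SimpleGraph V} (N : G.Subgraph) (hN : N.IsMatching) :
    N.verts.ncard = 2 * N.edgeSet.ncard := by
  have := Fintype.ofFinite V
  have h1 : Fintype.card N.verts = 2 * Fintype.card N.edgeSet := by
    rw [← Finset.card_univ, Finset.card_eq_sum_card_fiberwise (f := hN.toEdge) (t := Finset.univ)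
      (by simp), Finset.sum_const_nat (m := 2), Finset.card_univ, mul_comm]
    rintro ⟨e, he⟩ -
    induction e with
    | _ u v =>
      have huv : N.Adj u v := he
      have := hN.toEdge_preimage_singleton huv
      have h2 : (Finset.univ.filter fun a => hN.toEdge a = ⟨s(u, v), he⟩) =
        {⟨u, N.edge_vert huv⟩, ⟨v, N.edge_vert (N.adj_symm huv)⟩} := by
        ext a
        have := Set.ext_iff.1 this a
        simpa using this
      rw [h2, Finset.card_pair]
      intro h
      exact huv.ne (congrArg Subtype.val h)
  rw [← Nat.card_coe_set_eq, ← Nat.card_coe_set_eq, Nat.card_eq_fintype_card,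
    Nat.card_eq_fintype_card, h1]

lemma matchingNumber_eq [Fintype V] {G : SimpleGraph V} (N : G.Subgraph) (hN : N.IsMatching)
    (hs : ∀ v, v ∈ N.verts) : 2 * matchingNumber G = Fintype.card V := by
  have hu : N.verts = Set.univ := Set.eq_univ_of_forall hs
  have h0 := matching_card N hN
  rw [hu, Set.ncard_univ, Nat.card_eq_fintype_card] at h0
  have : matchingNumber G = N.edgeSet.ncard := by
    unfold matchingNumber
    apply IsGreatest.csSup_eq
    refine ⟨⟨N, hN, rfl⟩, ?_⟩
    rintro k ⟨N', hN', rfl⟩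
    have h1 := matching_card N' hN'
    have h2 : N'.verts.ncard ≤ Fintype.card V := by
      rw [← Nat.card_eq_fintype_card]; exact Set.ncard_le_card _
    omega
  rw [this, h0]

open SimpleGraph in
lemma Inf.perfect {G : SimpleGraph V} {C₁ C₂ : G.Subgraph} {x : V} (h : Inf G C₁ C₂ x)
    (w₁ w₂ : G.Walk x x) (hw₁ : w₁.IsCycle) (hw₂ : w₂.IsCycle)
    (e₁ : w₁.toSubgraph = C₁) (e₂ : w₂.toSubgraph = C₂) (m n : ℕ)
    (l₁ : w₁.length = 2 * m + 2) (l₂ : w₂.length = 2 * n + 1) :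
    ∃ N : G.Subgraph, N.IsMatching ∧ ∀ v, v ∈ N.verts := by
  have ad : ∀ i : Fin (m + 1), G.Adj (w₁.getVert (2 * i)) (w₁.getVert (2 * i + 1)) := fun i =>
    C₁.adj_sub (cyc_adj e₁ _ (by omega))
  have bd : ∀ i : Fin n, G.Adj (w₂.getVert (2 * i + 1)) (w₂.getVert (2 * i + 2)) := fun i =>
    C₂.adj_sub (cyc_adj e₂ _ (by omega))
  have hab : ∀ i j, 0 < j → j < 2 * n + 1 → w₁.getVert i ≠ w₂.getVert j := by
    intro i j hj hj' hij
    have := (h.inter (w₁.getVert i)).1 ⟨cyc_mem e₁ i, by rw [hij]; exact cyc_mem e₂ j⟩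
    rw [hij] at this
    exact cyc_ne hw₂ j hj (by omega) this
  have ia : ∀ i j, i < 2 * m + 2 → j < 2 * m + 2 → w₁.getVert i = w₁.getVert j → i = j :=
    fun i j hi hj => cyc_inj hw₁ i j (by omega) (by omega)
  have ib : ∀ i j, i < 2 * n + 1 → j < 2 * n + 1 → w₂.getVert i = w₂.getVert j → i = j :=
    fun i j hi hj => cyc_inj hw₂ i j (by omega) (by omega)
  let f : Fin (m + 1) ⊕ Fin n → G.Subgraph :=
    Sum.elim (fun i => G.subgraphOfAdj (ad i)) (fun i => G.subgraphOfAdj (bd i))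
  have hf : ∀ i, (f i).IsMatching := by
    rintro (i | i)
    · exact Subgraph.IsMatching.subgraphOfAdj (ad i)
    · exact Subgraph.IsMatching.subgraphOfAdj (bd i)
  refine ⟨⨆ i, f i, Subgraph.IsMatching.iSup hf ?_, ?_⟩
  · intro i j hij
    rw [(hf i).support_eq_verts, (hf j).support_eq_verts, Set.disjoint_left]
    intro v hi hj
    rcases i with i | i <;> rcases j with j | j <;>
      simp only [f, Sum.elim_inl, Sum.elim_inr, subgraphOfAdj_verts, Set.mem_insert_iff,
        Set.mem_singleton_iff] at hi hj
    · apply hij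
      congr 1
      apply Fin.ext
      rcases hi with rfl | rfl <;> rcases hj with hj | hj <;>
        (have := ia _ _ (by omega) (by omega) hj; omega)
    · rcases hi with rfl | rfl <;> rcases hj with hj | hj <;>
        exact hab _ _ (by omega) (by omega) hj
    · rcases hi with rfl | rfl <;> rcases hj with hj | hj <;>
        exact hab _ _ (by omega) (by omega) hj.symm
    · apply hij
      congr 1
      apply Fin.ext
      rcases hi with rfl | rfl <;> rcases hj with hj | hj <;>
        (have := ib _ _ (by omega) (by omega) hj; omega)
  · have A : ∀ v ∈ C₁.verts, v ∈ (⨆ i, f i).verts := by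
      intro v hv
      obtain ⟨i, hi, rfl⟩ := cyc_cover hw₁ e₁ hv
      rw [Subgraph.verts_iSup, Set.mem_iUnion]
      refine ⟨Sum.inl ⟨i / 2, by omega⟩, ?_⟩
      simp only [f, Sum.elim_inl, subgraphOfAdj_verts, Set.mem_insert_iff, Set.mem_singleton_iff]
      rcases Nat.even_or_odd' i with ⟨r, hr⟩
      rcases hr with hr | hr
      · left; congr 1; omega
      · right; congr 1; omega
    intro v
    rcases h.cover v with hv | hv
    · exact A v hv
    · obtain ⟨i, hi, rfl⟩ := cyc_cover hw₂ e₂ hv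
      rcases Nat.eq_zero_or_pos i with rfl | hi0
      · rw [Walk.getVert_zero]; exact A x h.mem1
      rw [Subgraph.verts_iSup, Set.mem_iUnion]
      refine ⟨Sum.inr ⟨(i - 1) / 2, by omega⟩, ?_⟩
      simp only [f, Sum.elim_inr, subgraphOfAdj_verts, Set.mem_insert_iff, Set.mem_singleton_iff]
      rcases Nat.even_or_odd' i with ⟨r, hr⟩
      rcases hr with hr | hr
      · right; congr 1; omega
      · left; congr 1; omega

lemma row_pair [Fintype V] [DecidableEq V] (H : Matrix V V ℂ) (v a b : V) (hab : a ≠ b)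
    (P : V → Prop) (hP : ∀ u, P u ↔ u = a ∨ u = b) (y : V → ℂ) :
    ∑ u, (if P u then H v u * y u else 0) = H v a * y a + H v b * y b := by
  rw [← Finset.sum_filter, ← Finset.sum_pair (f := fun u => H v u * y u) hab]
  apply Finset.sum_congr _ (fun _ _ => rfl)
  ext u
  simp [hP]

section
variable [Fintype V] [DecidableEq V] (M : MixedGraph V)

/-- Edge weights along a closed walk, extended by `1`. -/
noncomputable def wt {x : V} (w : M.graph.Walk x x) (i : ℕ) : ℂ :=
  if i < w.length then M.hMatrix (w.getVert i) (w.getVert (i + 1)) else 1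

lemma wt_ne {x : V} (w : M.graph.Walk x x) (i : ℕ) : wt M w i ≠ 0 := by
  unfold wt
  split_ifs with h
  · exact hMatrix_ne_zero M (w.adj_getVert_succ h)
  · exact one_ne_zero

lemma wt_fwd {x : V} (w : M.graph.Walk x x) (i : ℕ) (hi : i < w.length) :
    M.hMatrix (w.getVert i) (w.getVert (i + 1)) = wt M w i := by
  simp [wt, hi]

lemma wt_bwd {x : V} (w : M.graph.Walk x x) (i : ℕ) (hi : i < w.length) :
    M.hMatrix (w.getVert (i + 1)) (w.getVert i) = (wt M w i)⁻¹ := by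
  rw [hMatrix_inv M (w.adj_getVert_succ hi), wt_fwd M w i hi]

lemma gg_wt {x : V} (w : M.graph.Walk x x) : gg (wt M w) w.length =
    Complex.I ^ ((w.darts.countP fun d => M.arc d.toProd.1 d.toProd.2 : ℤ) -
    (w.darts.countP fun d => M.arc d.toProd.2 d.toProd.1 : ℤ)) := by
  rw [← walk_prod]
  apply Finset.prod_congr rfl
  intro i hi
  rw [wt_fwd M w i (by simpa using hi)]

lemma row_internal {C₁ C₂ : M.graph.Subgraph} {x : V} (h : Inf M.graph C₁ C₂ x)
    (w : M.graph.Walk x x) (hw : w.IsCycle) (e : w.toSubgraph = C₁) (y : V → ℂ)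
    (i : ℕ) (hi : 0 < i) (hi' : i < w.length) :
    (M.hMatrix.mulVec y) (w.getVert i) = (wt M w (i - 1))⁻¹ * y (w.getVert (i - 1)) +
      wt M w i * y (w.getVert (i + 1)) := by
  rw [← wt_fwd M w i hi', ← wt_bwd M w (i - 1) (by omega), show i - 1 + 1 = i by omega,
    ← row_pair M.hMatrix (w.getVert i) _ _ (hw.getVert_sub_one_ne_getVert_add_one (by omega))
      (fun u => C₁.Adj (w.getVert i) u) (cyc_nbr hw e i hi hi')]
  apply Finset.sum_congr rfl
  intro u _
  split_ifs with hu
  · rfl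
  · rw [← h.adj_left (cyc_mem e i) (cyc_ne hw i hi hi')] at hu
    show M.hMatrix (w.getVert i) u * y u = 0
    rw [hMatrix_not_adj M hu, zero_mul]

lemma row_center {C₁ C₂ : M.graph.Subgraph} {x : V} (h : Inf M.graph C₁ C₂ x)
    (w₁ w₂ : M.graph.Walk x x) (hw₁ : w₁.IsCycle) (hw₂ : w₂.IsCycle)
    (e₁ : w₁.toSubgraph = C₁) (e₂ : w₂.toSubgraph = C₂) (y : V → ℂ) :
    (M.hMatrix.mulVec y) x = wt M w₁ 0 * y (w₁.getVert 1) +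
      (wt M w₁ (w₁.length - 1))⁻¹ * y (w₁.getVert (w₁.length - 1)) +
      (wt M w₂ 0 * y (w₂.getVert 1) +
      (wt M w₂ (w₂.length - 1))⁻¹ * y (w₂.getVert (w₂.length - 1))) := by
  have aux : ∀ (w : M.graph.Walk x x) (C : M.graph.Subgraph), w.IsCycle → w.toSubgraph = C →
      wt M w 0 * y (w.getVert 1) + (wt M w (w.length - 1))⁻¹ * y (w.getVert (w.length - 1)) =
      ∑ u, (if C.Adj x u then M.hMatrix x u * y u else 0) := by
    intro w C hw e
    have h3 := hw.three_le_length
    rw [row_pair M.hMatrix x _ _ hw.snd_ne_penultimate (fun u => C.Adj x u) (cyc_nbr_zero hw e),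
      ← wt_fwd M w 0 (by omega), ← wt_bwd M w _ (by omega),
      show w.length - 1 + 1 = w.length by omega, SimpleGraph.Walk.getVert_zero,
      SimpleGraph.Walk.getVert_length]
  rw [aux w₁ C₁ hw₁ e₁, aux w₂ C₂ hw₂ e₂, ← Finset.sum_add_distrib]
  apply Finset.sum_congr rfl
  intro u _
  by_cases h1 : C₁.Adj x u
  · have h2 : ¬ C₂.Adj x u := by
      intro h2
      have := (h.inter u).1 ⟨C₁.edge_vert (C₁.adj_symm h1), C₂.edge_vert (C₂.adj_symm h2)⟩
      exact h1.ne this.symm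
    simp [h1, h2]
  · by_cases h2 : C₂.Adj x u
    · simp [h1, h2]
    · have : ¬ M.graph.Adj x u := by rw [h.adj]; tauto
      simp [h1, h2, hMatrix_not_adj M this]

lemma Inf.rank_iff {C₁ C₂ : M.graph.Subgraph} {x : V} (h : Inf M.graph C₁ C₂ x)
    (w₁ w₂ : M.graph.Walk x x) (hw₁ : w₁.IsCycle) (hw₂ : w₂.IsCycle)
    (e₁ : w₁.toSubgraph = C₁) (e₂ : w₂.toSubgraph = C₂)
    (hp : Even C₁.verts.ncard) (hq : Odd C₂.verts.ncard) :
    (M.hRank : ℤ) = 2 * (matchingNumber M.graph : ℤ) - 2 * 1 + 1 ↔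
      walkSignature M w₁ % 4 = C₁.verts.ncard % 4 ∧ Even (walkSignature M w₂) := by
  have l₁ := cyc_length hw₁ e₁
  have l₂ := cyc_length hw₂ e₂
  have t₁ := hw₁.three_le_length
  obtain ⟨m, hm⟩ : ∃ m, w₁.length = 2 * m + 2 := by
    obtain ⟨r, hr⟩ := hp
    exact ⟨r - 1, by omega⟩
  obtain ⟨n, hn⟩ : ∃ n, w₂.length = 2 * n + 1 := by
    obtain ⟨r, hr⟩ := hq
    exact ⟨r, by omega⟩
  obtain ⟨N, hN, hN'⟩ := h.perfect w₁ w₂ hw₁ hw₂ e₁ e₂ m n hm hn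
  have hmat := matchingNumber_eq N hN hN'
  have hrk : M.hRank + Module.finrank ℂ (LinearMap.ker M.hMatrix.mulVecLin) = Fintype.card V := by
    have := LinearMap.finrank_range_add_finrank_ker M.hMatrix.mulVecLin
    rwa [Module.finrank_fintype_fun_eq_card] at this
  have hab : ∀ i j, i < 2 * m + 2 → j < 2 * n + 1 → w₁.getVert i = w₂.getVert j →
      i = 0 ∧ j = 0 := by
    intro i j hi hj hij
    have h1 := (h.inter (w₁.getVert i)).1 ⟨cyc_mem e₁ i, by rw [hij]; exact cyc_mem e₂ j⟩
    have h2 := h1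
    rw [hij] at h2
    constructor
    · by_contra h0
      exact cyc_ne hw₁ i (by omega) (by omega) h1
    · by_contra h0
      exact cyc_ne hw₂ j (by omega) (by omega) h2
  have key := nullity_one m n w₁.getVert w₂.getVert x (wt M w₁) (wt M w₂) (wt_ne M w₁) (wt_ne M w₂)
    (by simp) (by rw [← hm]; simp) (by simp) (by rw [← hn]; simp)
    (fun i j hi hj => cyc_inj hw₁ i j (by omega) (by omega))
    (fun i j hi hj => cyc_inj hw₂ i j (by omega) (by omega)) hab
    (by
      intro v
      rw [← hm, ← hn]
      exact (h.cover v).imp (cyc_cover hw₁ e₁) (cyc_cover hw₂ e₂))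
    (LinearMap.ker M.hMatrix.mulVecLin)
    (by
      intro y
      rw [LinearMap.mem_ker, Matrix.mulVecLin_apply, ← hm, ← hn]
      unfold KerEq
      constructor
      · intro hy
        refine ⟨?_, ?_, ?_⟩
        · intro i hi hi'
          rw [← row_internal M h w₁ hw₁ e₁ y i hi hi', hy]; rfl
        · intro i hi hi'
          rw [← row_internal M h.swap w₂ hw₂ e₂ y i hi hi', hy]; rfl
        · rw [← row_center M h w₁ w₂ hw₁ hw₂ e₁ e₂ y, hy]; rfl
      · rintro ⟨k1, k2, k3⟩
        have hx : (M.hMatrix.mulVec y) x = 0 := by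
          rw [row_center M h w₁ w₂ hw₁ hw₂ e₁ e₂ y, k3]
        funext v
        rcases h.cover v with hv | hv
        · obtain ⟨i, hi, rfl⟩ := cyc_cover hw₁ e₁ hv
          rcases Nat.eq_zero_or_pos i with rfl | hi0
          · simpa using hx
          · rw [row_internal M h w₁ hw₁ e₁ y i hi0 hi, k1 i hi0 hi]; rfl
        · obtain ⟨i, hi, rfl⟩ := cyc_cover hw₂ e₂ hv
          rcases Nat.eq_zero_or_pos i with rfl | hi0
          · simpa using hx
          · rw [row_internal M h.swap w₂ hw₂ e₂ y i hi0 hi, k2 i hi0 hi]; rfl)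
  rw [← hm, ← hn, gg_wt, gg_wt, even_weight, odd_weight, ← hm, l₁] at key
  refine Iff.trans ?_ key
  omega
end

/-- Let G̃ be a mixed bicyclic graph with underlying graph
∞(p,1,q), p even, q odd. Then r(G̃) = 2m(G) − 2κ(G) + 1 iff the odd cycle of G̃ has
even signature and the even cycle C̃_p satisfies σ(C̃_p) ≡ p (mod 4). -/
theorem infinity_hRank_eq_lower_bound_add_one_iff
    {V : Type u} [Fintype V] [DecidableEq V] (M : MixedGraph V) (p q : ℕ)
    (hp : Even p) (hq : Odd q) (hG : IsInfinityGraph M.graph p q) :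
    (M.hRank : ℤ) =
        2 * (matchingNumber M.graph : ℤ) - 2 * (evenCycleCount M.graph : ℤ) + 1 ↔
      (OddCyclesSig M Even ∧ EvenCyclesSig M (fun n s => s % 4 = n % 4)) := by
  obtain ⟨C₁, C₂, c1, c2, rfl, rfl, hinter, hsup⟩ := hG
  obtain ⟨x, hx⟩ := Set.ncard_eq_one.1 hinter
  have h : Inf M.graph C₁ C₂ x := ⟨c1, c2, fun v => Set.ext_iff.1 hx v, hsup⟩
  have key := fun w₁ w₂ hw₁ hw₂ e₁ e₂ => h.rank_iff M w₁ w₂ hw₁ hw₂ e₁ e₂ hp hq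
  have hE : ∀ C : M.graph.Subgraph, IsCycleSubgraph C → Even C.verts.ncard → C = C₁ := by
    intro C hC hev
    rcases h.classify hC with rfl | rfl
    · rfl
    · exact absurd hq (Nat.not_odd_iff_even.2 hev)
  have hO : ∀ C : M.graph.Subgraph, IsCycleSubgraph C → Odd C.verts.ncard → C = C₂ := by
    intro C hC hod
    rcases h.classify hC with rfl | rfl
    · exact absurd hod (Nat.not_odd_iff_even.2 hp)
    · rfl
  have hκ : evenCycleCount M.graph = 1 := by
    unfold evenCycleCount
    rw [Set.ncard_eq_one]
    refine ⟨C₁, ?_⟩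
    ext C
    constructor
    · rintro ⟨hC, hev⟩
      exact hE C hC hev
    · rintro rfl
      exact ⟨c1, hp⟩
  rw [hκ, Nat.cast_one]
  constructor
  · intro hr
    obtain ⟨w₁, hw₁, e₁⟩ := exists_cycle_walk C₁ c1 x h.mem1
    obtain ⟨w₂, hw₂, e₂⟩ := exists_cycle_walk C₂ c2 x h.mem2
    obtain ⟨s1, s2⟩ := (key w₁ w₂ hw₁ hw₂ e₁ e₂).1 hr
    constructor
    · intro C hC hod
      obtain rfl := hO C hC hod
      exact (cycleSig_iff M _ _ x h.mem2).2 ⟨w₂, hw₂, e₂, s2⟩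
    · intro C hC hev
      obtain rfl := hE C hC hev
      exact (cycleSig_iff M _ _ x h.mem1).2 ⟨w₁, hw₁, e₁, s1⟩
  · rintro ⟨hodd, heven⟩
    obtain ⟨w₂, hw₂, e₂, s2⟩ := (cycleSig_iff M _ _ x h.mem2).1 (hodd C₂ c2 hq)
    obtain ⟨w₁, hw₁, e₁, s1⟩ := (cycleSig_iff M _ _ x h.mem1).1 (heven C₁ c1 hp)
    exact (key w₁ w₂ hw₁ hw₂ e₁ e₂).2 ⟨s1, s2⟩

end MixedPaper
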